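/- Let f : ℝ^m → ℝ^k be differentiable with S-Lipschitz derivative, i.e. ‖∇f(u) − ∇f(v)‖₂ ≤ S ‖u − v‖₂ for all u, v, where ∇f denotes the transposed Jacobian and ‖·‖₂ the Frobenius norm. Then for all a, b, c ∈ ℝ^m, ‖ f((a+b)/2) − (1/2) f(a) − (1/2) f(b) ‖₂ ≤ (S/2) ‖(a+b)/2 − c‖₂² + (S/4) ‖a − c‖₂² + (S/4) ‖b − c‖₂². -/

import Mathlib

/-!
The linear map `fderiv ℝ f c` applied to `(a + b) / 2 - c` is the average of its values at `a - c`
and `b - c`, so the antithetic difference is a combination, with weights `1, -1/2, -1/2`, of the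
first-order Taylor remainders of `f` around `c`. Each remainder at `x` is at most
`S / 2 * ‖x - c‖ ^ 2` (`norm_taylor_remainder_le`), and the triangle inequality concludes.
-/

/-- First-order Taylor remainder of a map with `S`-Lipschitz derivative. Along the segment
`t ↦ c + t • (x - c)` the remainder has derivative of norm at most `S * ‖x - c‖ ^ 2 * t`, which is
the derivative of the majorant `S / 2 * ‖x - c‖ ^ 2 * t ^ 2`. -/
lemma norm_taylor_remainder_le {E F : Type*} [NormedAddCommGroup E] [NormedSpace ℝ E]
    [NormedAddCommGroup F] [NormedSpace ℝ F] {f : E → F} {S : ℝ} (hdiff : Differentiable ℝ f)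
    (hsmooth : ∀ u v, ‖fderiv ℝ f u - fderiv ℝ f v‖ ≤ S * ‖u - v‖) (x c : E) :
    ‖f x - f c - fderiv ℝ f c (x - c)‖ ≤ S / 2 * ‖x - c‖ ^ 2 := by
  have hg : ∀ t : ℝ, HasDerivAt
      (fun t : ℝ => f (c + t • (x - c)) - f c - t • fderiv ℝ f c (x - c))
      ((fderiv ℝ f (c + t • (x - c)) - fderiv ℝ f c) (x - c)) t := by
    intro t
    have hl : HasDerivAt (fun t : ℝ => c + t • (x - c)) (x - c) t := by
      simpa using ((hasDerivAt_id t).smul_const (x - c)).const_add c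
    have hL : HasDerivAt (fun t : ℝ => t • fderiv ℝ f c (x - c)) (fderiv ℝ f c (x - c)) t := by
      simpa using (hasDerivAt_id t).smul_const (fderiv ℝ f c (x - c))
    exact (((hdiff _).hasFDerivAt.comp_hasDerivAt t hl).sub_const (f c)).sub hL
  have hB : ∀ t : ℝ, HasDerivAt (fun t : ℝ => S / 2 * ‖x - c‖ ^ 2 * t ^ 2)
      (S * ‖x - c‖ ^ 2 * t) t := by
    intro t
    refine ((hasDerivAt_pow 2 t).const_mul (S / 2 * ‖x - c‖ ^ 2)).congr_deriv ?_
    push_cast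
    ring
  have h := image_norm_le_of_norm_deriv_right_le_deriv_boundary (a := 0) (b := 1)
    (fun t _ => (hg t).continuousAt.continuousWithinAt) (fun t _ => (hg t).hasDerivWithinAt)
    (by simp) hB
    (fun t ht => by
      calc _ ≤ ‖fderiv ℝ f (c + t • (x - c)) - fderiv ℝ f c‖ * ‖x - c‖ :=
            ContinuousLinearMap.le_opNorm _ _
        _ ≤ S * ‖c + t • (x - c) - c‖ * ‖x - c‖ := by
            gcongr
            exact hsmooth _ _
        _ = S * ‖x - c‖ ^ 2 * t := by
            rw [add_sub_cancel_left, norm_smul, Real.norm_of_nonneg ht.1]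
            ring)
    (Set.right_mem_Icc.2 zero_le_one)
  simpa using h

/-- **Quadratic antithetic bound for smooth maps.** If `f : ℝ^m → ℝ^k` is differentiable
with `S`-Lipschitz derivative, then for all `a, b, c`,
`‖f((a+b)/2) − (1/2)f(a) − (1/2)f(b)‖ ≤ (S/2)‖(a+b)/2 − c‖² + (S/4)‖a − c‖² + (S/4)‖b − c‖²`. -/
theorem antithetic_smooth_bound {m k : ℕ}
    (f : EuclideanSpace ℝ (Fin m) → EuclideanSpace ℝ (Fin k)) (S : ℝ)
    (hdiff : Differentiable ℝ f)
    (hsmooth : ∀ u v, ‖fderiv ℝ f u - fderiv ℝ f v‖ ≤ S * ‖u - v‖)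
    (a b c : EuclideanSpace ℝ (Fin m)) :
    ‖f ((2 : ℝ)⁻¹ • (a + b)) - (2 : ℝ)⁻¹ • f a - (2 : ℝ)⁻¹ • f b‖ ≤
      S / 2 * ‖(2 : ℝ)⁻¹ • (a + b) - c‖ ^ 2 + S / 4 * ‖a - c‖ ^ 2 + S / 4 * ‖b - c‖ ^ 2 := by
  have hm := norm_taylor_remainder_le hdiff hsmooth ((2 : ℝ)⁻¹ • (a + b)) c
  have ha := norm_taylor_remainder_le hdiff hsmooth a c
  have hb := norm_taylor_remainder_le hdiff hsmooth b c
  set L := fderiv ℝ f c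
  have key : f ((2 : ℝ)⁻¹ • (a + b)) - (2 : ℝ)⁻¹ • f a - (2 : ℝ)⁻¹ • f b =
      (f ((2 : ℝ)⁻¹ • (a + b)) - f c - L ((2 : ℝ)⁻¹ • (a + b) - c))
        - (2 : ℝ)⁻¹ • (f a - f c - L (a - c)) - (2 : ℝ)⁻¹ • (f b - f c - L (b - c)) := by
    simp only [map_sub, map_smul, map_add]
    module
  rw [key]
  refine (norm_sub_le _ _).trans ((add_le_add_left (norm_sub_le _ _) _).trans ?_)
  rw [norm_smul, norm_smul, Real.norm_of_nonneg (by norm_num : (0 : ℝ) ≤ 2⁻¹)]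
  linarith
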